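/- arXiv:1403.4205 — 2 statements merged into one kernel-verified Lean document; each statement's English description precedes it below -/
import Mathlib

section
/- Let p ≥ 1 and let M = (m_{i,j})_{1≤i,j≤p} be a real p × p matrix all of whose entries are nonzero and which satisfies |m_{i',j} m_{i,j'}| ≤ (1/(p+1)!) |m_{i,j} m_{i',j'}| for all indices i, j, i', j' with i < i' and j < j'. Then M is invertible. -/
/-!
In the Leibniz expansion of `det M`, the diagonal term dominates. Given a permutation `σ ≠ 1`, let
`i` be its least non-fixed point. Then `σ i` and `σ⁻¹ i` both exceed `i`, so the cross-product
hypothesis applies to the entries at `(σ i, i)` and `(i, σ⁻¹ i)`: replacing `σ` by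
`swap i (σ i) * σ`, which has smaller support, costs at most a factor `c = 1 / (p + 1)!`.
By induction on the support, every non-identity term is at most `c` times the diagonal term
(`abs_prod_perm_le`). As there are fewer than `(p + 1)!` such terms, the determinant is nonzero.
-/

open Equiv

/-- The uncrossing step: one multiplication by a transposition fixes the least non-fixed point `i`
of `σ` and gains the factor `c`. -/
lemma abs_prod_perm_le_swap_mul {p : ℕ} (M : Matrix (Fin p) (Fin p) ℝ) (c : ℝ)
    (h : ∀ i i' j j' : Fin p, i < i' → j < j' → |M i' j * M i j'| ≤ c * |M i j * M i' j'|)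
    (σ : Perm (Fin p)) (i : Fin p) (hi : σ i ≠ i) (hmin : ∀ l < i, σ l = l) :
    |∏ l, M (σ l) l| ≤ c * |∏ l, M ((swap i (σ i) * σ) l) l| := by
  obtain ⟨k, hk⟩ := σ.surjective i
  have hki : k ≠ i := by rintro rfl; exact hi hk
  have hik : i < k := by
    by_contra hlt
    have := hmin k (lt_of_le_of_ne (not_lt.mp hlt) hki)
    exact hki (this.symm.trans hk)
  have hij : i < σ i := by
    by_contra hlt
    exact hi (σ.injective (hmin (σ i) (lt_of_le_of_ne (not_lt.mp hlt) hi)))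
  have hrest : ∏ l ∈ ({i, k} : Finset (Fin p))ᶜ, M ((swap i (σ i) * σ) l) l
      = ∏ l ∈ ({i, k} : Finset (Fin p))ᶜ, M (σ l) l := by
    refine Finset.prod_congr rfl fun l hl => ?_
    simp only [Finset.mem_compl, Finset.mem_insert, Finset.mem_singleton, not_or] at hl
    rw [Perm.mul_apply, swap_apply_of_ne_of_ne]
    · rw [← hk]; exact fun e => hl.2 (σ.injective e)
    · exact fun e => hl.1 (σ.injective e)
  rw [← Finset.prod_mul_prod_compl {i, k} (fun l => M (σ l) l),
    ← Finset.prod_mul_prod_compl {i, k} (fun l => M ((swap i (σ i) * σ) l) l), hrest,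
    Finset.prod_pair hki.symm, Finset.prod_pair hki.symm, Perm.mul_apply, Perm.mul_apply, hk,
    swap_apply_right, swap_apply_left, abs_mul, abs_mul (M i i * _), ← mul_assoc]
  exact mul_le_mul_of_nonneg_right (h i (σ i) i k hij hik) (abs_nonneg _)

lemma abs_prod_perm_le {p : ℕ} (M : Matrix (Fin p) (Fin p) ℝ) (c : ℝ) (hc0 : 0 ≤ c) (hc1 : c ≤ 1)
    (h : ∀ i i' j j' : Fin p, i < i' → j < j' → |M i' j * M i j'| ≤ c * |M i j * M i' j'|)
    (σ : Perm (Fin p)) (hσ : σ ≠ 1) :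
    |∏ l, M (σ l) l| ≤ c * |∏ l, M l l| := by
  induction hn : σ.support.card using Nat.strong_induction_on generalizing σ with
  | _ n ih =>
    have hne : σ.support.Nonempty :=
      Finset.nonempty_iff_ne_empty.mpr fun e => hσ (Perm.support_eq_empty_iff.mp e)
    have hi := Perm.mem_support.mp (Finset.min'_mem _ hne)
    set i := σ.support.min' hne
    have hmin : ∀ l < i, σ l = l := fun l hl => by
      by_contra hl'
      exact absurd (Finset.min'_le _ l (Perm.mem_support.mpr hl')) (not_le.mpr hl)
    refine (abs_prod_perm_le_swap_mul M c h σ i hi hmin).trans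
      (mul_le_mul_of_nonneg_left ?_ hc0)
    by_cases hτ : swap i (σ i) * σ = 1
    · simp [hτ]
    · refine (ih _ ?_ _ hτ rfl).trans (mul_le_of_le_one_left (abs_nonneg _) hc1)
      rw [← hn]
      exact Perm.card_support_swap_mul hi

/-- A real square matrix with nonzero entries whose `2 × 2` "cross products" decay
rapidly (Fischler's lemma) is invertible. -/
theorem fischler_matrix_invertible
    (p : ℕ) (hp : 1 ≤ p) (M : Matrix (Fin p) (Fin p) ℝ)
    (hM : ∀ i j, M i j ≠ 0)
    (h : ∀ i i' j j' : Fin p, i < i' → j < j' →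
      |M i' j * M i j'| ≤ (1 / (Nat.factorial (p + 1) : ℝ)) * |M i j * M i' j'|) :
    IsUnit M := by
  rw [Matrix.isUnit_iff_isUnit_det, isUnit_iff_ne_zero]
  intro hdet
  have hpos : (0 : ℝ) < Nat.factorial (p + 1) := by positivity
  have hone : (1 : ℝ) ≤ Nat.factorial (p + 1) := by exact_mod_cast Nat.factorial_pos (p + 1)
  have hD : 0 < |∏ l, M l l| := abs_pos.mpr (Finset.prod_ne_zero_iff.mpr fun l _ => hM l l)
  rw [Matrix.det_apply, ← Finset.add_sum_erase _ _ (Finset.mem_univ 1)] at hdet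
  simp only [Perm.sign_one, one_smul, Perm.one_apply] at hdet
  have hle : |∏ l, M l l| ≤ ∑ σ ∈ Finset.univ.erase (1 : Perm (Fin p)),
      1 / (Nat.factorial (p + 1) : ℝ) * |∏ l, M l l| := by
    have heq := congrArg abs (eq_neg_of_add_eq_zero_left hdet)
    rw [abs_neg] at heq
    refine heq.le.trans <| (Finset.abs_sum_le_sum_abs _ _).trans (Finset.sum_le_sum fun σ hσ => ?_)
    have habs : |Perm.sign σ • ∏ l, M (σ l) l| = |∏ l, M (σ l) l| := by
      rcases Int.units_eq_one_or (Perm.sign σ) with e | e <;> simp [e]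
    rw [habs]
    exact abs_prod_perm_le M _ (by positivity) ((div_le_one hpos).mpr hone) h σ
      (Finset.ne_of_mem_erase hσ)
  have hcard : (((Finset.univ.erase (1 : Perm (Fin p))).card : ℕ) : ℝ)
      < Nat.factorial (p + 1) := by
    have h1 := Finset.card_erase_lt_of_mem (Finset.mem_univ (1 : Perm (Fin p)))
    rw [Finset.card_univ, Fintype.card_perm, Fintype.card_fin] at h1
    exact_mod_cast h1.trans_le (Nat.factorial_le (Nat.le_succ p))
  rw [Finset.sum_const, nsmul_eq_mul, ← mul_assoc, mul_one_div] at hle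
  have := mul_lt_mul_of_pos_right ((div_lt_one hpos).mpr hcard) hD
  linarith
end

section
/- Let p ≥ 2, let ξ_1,…,ξ_{p-1} be arbitrary reals and τ_1,…,τ_{p-1} reals > −1. For every i ∈ {1,…,p} and n ∈ ℕ, let δ_{i,n} be a positive integer with δ_{i,n} dividing δ_{i,n+1}, and let Λ_n = δ_{1,n}ℤ ⊕ ⋯ ⊕ δ_{p,n}ℤ ⊆ ℤ^p, with dual lattice Λ_n^⊥ = { x ∈ ℝ^p : Σ_{i=1}^p ℓ_i x_i ∈ ℤ for every (ℓ_1,…,ℓ_p) ∈ Λ_n } = { x ∈ ℚ^p : δ_{i,n}x_i ∈ ℤ for all i }. Let (Q_n)_{n∈ℕ} be a strictly increasing sequence of positive integers with Q_{n+1} = Q_n^{1+o(1)}, and suppose that for every i ∈ {1,…,p} there exists a real γ_i such that δ_{i,n} = Q_n^{γ_i+o(1)}. If γ_p + Σ_{i : 1≤i≤p−1, τ_i+γ_i≥0} (τ_i + γ_i) > 1, then for every ε > 0 with γ_p + Σ_{i : τ_i+γ_i≥0}(τ_i+γ_i) > 1 + (p+2)ε and every sufficiently large Q, there exists (a_1,…,a_p)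 ∈ Λ_{Φ(Q)}^⊥ \ {0} with |a_i| ≤ Q^{τ_i−ε} for every i ∈ {1,…,p−1} and |a_1ξ_1 + ⋯ + a_{p-1}ξ_{p-1} + a_p| ≤ Q^{−1−ε}. -/
/-!
The proof is Dirichlet's pigeonhole argument. Write `n = Φ(Q')` and `aᵢ = zᵢ / δᵢₙ` with `zᵢ` an
integer. For `i < p` the size condition allows `|zᵢ| ≤ Mᵢ = ⌊δᵢₙ Q'^(τᵢ-ε)⌋`, so there are
`∏ (Mᵢ + 1)` tuples with entries in `[0, Mᵢ]`, and the last coordinate has to make the form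
`∑ zᵢ (δₚₙ ξᵢ / δᵢₙ) + zₚ` at most `δₚₙ Q'^(-1-ε)` in absolute value. By pigeonhole modulo `1`
(`exists_small_form`) this is possible as soon as `2 Q'^(1+ε) < δₚₙ ∏ (Mᵢ + 1)`.

Since `Q' < Q_{n+1} = Q_n^(1+o(1))`, one has `δᵢₙ ≥ Q'^(γᵢ-η)` for every `η > 0` and `Q'` large
(`eventually_delta_ge`). As `Mᵢ + 1` is also at least `1`, it is at least
`Q'^(max(0, τᵢ+γᵢ) - ε - η)`, and with `η = ε / p` the quantity `δₚₙ ∏ (Mᵢ + 1)` is at least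
`Q'^(1+2ε) > 2 Q'^(1+ε)`.
-/

open Filter

/-- `Φ(x) = max {k : Q k ≤ x}`. -/
noncomputable def Phi (Q : ℕ → ℕ) (x : ℝ) : ℕ := sSup {k : ℕ | (Q k : ℝ) ≤ x}

open Finset in
/-- Dirichlet's pigeonhole principle for one linear form with box constraints. For `X ≤ 1` the
solution `z = 0, w = 1` is used; for `X > 1` the unit interval is cut into `⌈X⌉₊ < 2 X` pieces. -/
lemma exists_small_form {m : ℕ} (x : Fin m → ℝ) (M : Fin m → ℕ) (X : ℝ) (hX : 0 < X)
    (hM : 2 * X < ∏ i, ((M i : ℝ) + 1)) :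
    ∃ (z : Fin m → ℤ) (w : ℤ), (z ≠ 0 ∨ w ≠ 0) ∧ (∀ i, |(z i : ℝ)| ≤ M i) ∧
      |∑ i, (z i : ℝ) * x i + w| ≤ 1 / X := by
  rcases le_or_gt X 1 with h1 | h1
  · refine ⟨0, 1, Or.inr one_ne_zero, fun i => by simp, ?_⟩
    have : 1 ≤ 1 / X := by rw [le_div_iff₀ hX]; linarith
    simpa using this
  set N := ⌈X⌉₊ with hN
  have hXN : X ≤ N := Nat.le_ceil X
  have hNX : (N : ℝ) < X + 1 := Nat.ceil_lt_add_one hX.le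
  have hN0 : (0 : ℝ) < N := hX.trans_le hXN
  let S : Finset (Fin m → ℕ) := Fintype.piFinset fun i => range (M i + 1)
  let L : (Fin m → ℕ) → ℝ := fun u => ∑ i, (u i : ℝ) * x i
  have hcard : #(Ico (0 : ℤ) N) < #S := by
    have : (N : ℝ) < ∏ i, ((M i : ℝ) + 1) := by linarith
    simp only [S, Fintype.card_piFinset, card_range, Int.card_Ico, sub_zero, Int.toNat_natCast]
    exact_mod_cast this
  have hmaps : ∀ u ∈ S, ⌊N * Int.fract (L u)⌋ ∈ Ico (0 : ℤ) N := by
    intro u _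
    have h0 := Int.fract_nonneg (L u)
    have h1 := Int.fract_lt_one (L u)
    rw [mem_Ico, Int.floor_lt]
    refine ⟨Int.floor_nonneg.2 (by positivity), ?_⟩
    push_cast
    nlinarith
  obtain ⟨u, hu, v, hv, huv, hf⟩ := exists_ne_map_eq_of_card_lt_of_maps_to hcard hmaps
  refine ⟨fun i => (u i : ℤ) - v i, ⌊L v⌋ - ⌊L u⌋, Or.inl ?_, ?_, ?_⟩
  · intro h
    apply huv
    funext i
    have := congrFun h i
    simp only [Pi.zero_apply] at this
    omega
  · intro i
    have h1 := mem_range.1 (Fintype.mem_piFinset.1 hu i)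
    have h2 := mem_range.1 (Fintype.mem_piFinset.1 hv i)
    have : |(u i : ℤ) - v i| ≤ M i := by rw [abs_le]; omega
    exact_mod_cast this
  · have habs := Int.abs_sub_lt_one_of_floor_eq_floor hf
    have e : ∑ i, (((u i : ℤ) - v i : ℤ) : ℝ) * x i + ((⌊L v⌋ - ⌊L u⌋ : ℤ) : ℝ)
        = Int.fract (L u) - Int.fract (L v) := by
      simp only [Int.fract, L]
      push_cast
      simp only [sub_mul, sum_sub_distrib]
      ring
    rw [e, le_div_iff₀ hX]
    rw [← mul_sub, abs_mul, abs_of_pos hN0] at habs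
    have := abs_nonneg (Int.fract (L u) - Int.fract (L v))
    nlinarith

lemma Phi_bddAbove {Q : ℕ → ℕ} (hQ : StrictMono Q) (x : ℝ) :
    BddAbove {k : ℕ | (Q k : ℝ) ≤ x} := by
  refine ⟨⌈x⌉₊, fun k hk => ?_⟩
  have h1 : (k : ℝ) ≤ Q k := by exact_mod_cast hQ.id_le k
  exact_mod_cast h1.trans (le_trans hk (Nat.le_ceil x))

lemma le_Phi {Q : ℕ → ℕ} (hQ : StrictMono Q) {x : ℝ} {n : ℕ} (h : (Q n : ℝ) ≤ x) :
    n ≤ Phi Q x := le_csSup (Phi_bddAbove hQ x) h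

lemma lt_Phi_succ {Q : ℕ → ℕ} (hQ : StrictMono Q) (x : ℝ) : x < Q (Phi Q x + 1) := by
  by_contra! h
  have := le_Phi hQ h
  omega

/-- The lower half of `δₙ = Q_n^(γ+o(1))` transfers to `n = Φ(x)` and powers of `x`, because
`x < Q_{n+1} = Q_n^(1+o(1))`. -/
lemma eventually_delta_ge {Q : ℕ → ℕ} (hQpos : ∀ n, 0 < Q n) (hQmono : StrictMono Q)
    (hQ : Tendsto (fun n => Real.log (Q (n + 1)) / Real.log (Q n)) atTop (nhds 1))
    {d : ℕ → ℕ} (hd : ∀ n, 0 < d n) {g : ℝ}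
    (hg : ∀ ε > 0, ∃ N, ∀ n ≥ N, (Q n : ℝ) ^ (g - ε) ≤ (d n : ℝ)) {η : ℝ} (hη : 0 < η) :
    ∀ᶠ x : ℝ in atTop, x ^ (g - η) ≤ d (Phi Q x) := by
  rcases le_or_gt (g - η) 0 with hneg | hpos
  · filter_upwards [eventually_ge_atTop 1] with x hx
    have : (1 : ℝ) ≤ d (Phi Q x) := by exact_mod_cast hd _
    exact (Real.rpow_le_one_of_one_le_of_nonpos hx hneg).trans this
  -- `θ` is chosen so that `(1 + θ) * (g - η) = g - η / 2`
  set θ := η / 2 / (g - η) with hθ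
  have hθ0 : 0 < θ := by positivity
  obtain ⟨N₁, hN₁⟩ := hg (η / 2) (by positivity)
  obtain ⟨N₂, hN₂⟩ := eventually_atTop.1 (hQ.eventually_lt_const (show (1 : ℝ) < 1 + θ by linarith))
  set N := max (max N₁ N₂) 1 with hN
  filter_upwards [eventually_ge_atTop (Q N : ℝ)] with x hx
  have hn : N ≤ Phi Q x := le_Phi hQmono hx
  have hlt := lt_Phi_succ hQmono x
  set n := Phi Q x
  have hx0 : 0 < x := lt_of_lt_of_le (by exact_mod_cast hQpos N) hx
  have hQn : (1 : ℝ) < Q n := by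
    have : Q 0 < Q n := hQmono (by omega)
    have := hQpos 0
    exact_mod_cast (by omega : 1 < Q n)
  have hlog := hN₂ n (by omega)
  rw [div_lt_iff₀ (Real.log_pos hQn)] at hlog
  have hxQ : x ≤ (Q n : ℝ) ^ (1 + θ) := by
    rw [← Real.log_le_log_iff hx0 (by positivity), Real.log_rpow (by positivity)]
    exact (Real.log_lt_log hx0 hlt).le.trans hlog.le
  calc x ^ (g - η) ≤ ((Q n : ℝ) ^ (1 + θ)) ^ (g - η) := Real.rpow_le_rpow hx0.le hxQ hpos.le
    _ = (Q n : ℝ) ^ (g - η / 2) := by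
      rw [← Real.rpow_mul (by positivity)]
      congr 1
      rw [hθ]
      field_simp
      ring
    _ ≤ d n := hN₁ n (by omega)

/-- **Second part of Proposition 7 of the paper**: if
`γ_p + Σ_{τ_i+γ_i ≥ 0} (τ_i+γ_i) > 1`, then for suitable `ε > 0` and all large `Q` there is
a nonzero element of the dual lattice `Λ_{Φ(Q)}^⊥` (i.e. a rational tuple `a` with
`δ_{i,Φ(Q)} a_i ∈ ℤ`) with small coefficients making the linear form in `1, ξ_1, …, ξ_{p-1}`
very small. -/
theorem construction_of_small_rational_form
    (p : ℕ) (hp : 2 ≤ p) (ξ : Fin (p - 1) → ℝ)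
    (τ : Fin (p - 1) → ℝ) (hτ : ∀ i, -1 < τ i)
    (δ : Fin p → ℕ → ℕ) (hδpos : ∀ i n, 0 < δ i n)
    (hδdvd : ∀ i n, δ i n ∣ δ i (n + 1))
    (Q : ℕ → ℕ) (hQpos : ∀ n, 0 < Q n) (hQmono : StrictMono Q)
    (hQ : Tendsto (fun n => Real.log (Q (n + 1)) / Real.log (Q n)) atTop (nhds 1))
    (γ : Fin p → ℝ)
    (hγ : ∀ i : Fin p, ∀ ε > 0, ∃ N, ∀ n ≥ N,
      (Q n : ℝ) ^ (γ i - ε) ≤ (δ i n : ℝ) ∧ (δ i n : ℝ) ≤ (Q n : ℝ) ^ (γ i + ε))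
    (hsum : 1 < γ ⟨p - 1, by omega⟩ +
        (∑ i : Fin (p - 1),
          if 0 ≤ τ i + γ ⟨i.1, by have := i.2; omega⟩ then τ i + γ ⟨i.1, by have := i.2; omega⟩
          else 0)) :
    ∀ ε > 0,
      1 + (p + 2 : ℝ) * ε < γ ⟨p - 1, by omega⟩ +
        (∑ i : Fin (p - 1),
          if 0 ≤ τ i + γ ⟨i.1, by have := i.2; omega⟩ then τ i + γ ⟨i.1, by have := i.2; omega⟩
          else 0) →
      ∃ Q₀ : ℝ, ∀ Q' : ℝ, Q₀ ≤ Q' →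
        ∃ a : Fin p → ℚ, a ≠ 0 ∧
          (∀ i : Fin p, ∃ z : ℤ, (δ i (Phi Q Q') : ℚ) * a i = z) ∧
          (∀ i : Fin (p - 1), |((a ⟨i.1, by have := i.2; omega⟩ : ℚ) : ℝ)| ≤ Q' ^ (τ i - ε)) ∧
          |∑ i : Fin (p - 1), ((a ⟨i.1, by have := i.2; omega⟩ : ℚ) : ℝ) * ξ i +
              ((a ⟨p - 1, by omega⟩ : ℚ) : ℝ)| ≤ Q' ^ (-1 - ε) := by
  intro ε hε hsum'
  have hp0 : (0 : ℝ) < p := by exact_mod_cast (by omega : 0 < p)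
  set η := ε / p with hη
  have hη0 : 0 < η := by positivity
  have hpη : p * η = ε := by rw [hη]; field_simp
  have hev : ∀ᶠ x : ℝ in atTop, ∀ i, x ^ (γ i - η) ≤ δ i (Phi Q x) :=
    eventually_all.2 fun i => eventually_delta_ge hQpos hQmono hQ (hδpos i)
      (fun e he => (hγ i e he).imp fun N h n hn => (h n hn).1) hη0
  have hev2 : ∀ᶠ x : ℝ in atTop, 2 < x ^ ε := (tendsto_rpow_atTop hε).eventually_gt_atTop 2
  obtain ⟨Q₀, hQ₀⟩ := eventually_atTop.1 ((hev.and hev2).and (eventually_ge_atTop 1))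
  refine ⟨Q₀, fun x hx => ?_⟩
  obtain ⟨⟨hδ, h2⟩, hx1⟩ := hQ₀ x hx
  have hx0 : 0 < x := by linarith
  set n := Phi Q x
  let ι : Fin (p - 1) → Fin p := fun i => ⟨i.1, by have := i.2; omega⟩
  let l : Fin p := ⟨p - 1, by omega⟩
  have hd : ∀ i, (0 : ℝ) < δ i n := fun i => by exact_mod_cast hδpos i n
  let M : Fin (p - 1) → ℕ := fun i => ⌊(δ (ι i) n : ℝ) * x ^ (τ i - ε)⌋₊
  let s : Fin (p - 1) → ℝ := fun i => if 0 ≤ τ i + γ (ι i) then τ i + γ (ι i) else 0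
  have hs : 1 + (p + 2 : ℝ) * ε < γ l + ∑ i, s i := hsum'
  have hMs : ∀ i, x ^ (s i - (ε + η)) ≤ (M i : ℝ) + 1 := by
    intro i
    by_cases h : 0 ≤ τ i + γ (ι i)
    · calc x ^ (s i - (ε + η)) = x ^ (γ (ι i) - η) * x ^ (τ i - ε) := by
            rw [← Real.rpow_add hx0]
            simp only [s, if_pos h]
            congr 1
            ring
        _ ≤ δ (ι i) n * x ^ (τ i - ε) := by gcongr; exact hδ _
        _ ≤ (M i : ℝ) + 1 := (Nat.lt_floor_add_one _).le
    · have : x ^ (s i - (ε + η)) ≤ 1 := by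
        apply Real.rpow_le_one_of_one_le_of_nonpos hx1
        simp only [s, if_neg h]
        linarith
      have : (0 : ℝ) ≤ M i := by positivity
      linarith
  have hprod : x ^ (∑ i, s i - (p - 1) * (ε + η)) ≤ ∏ i, ((M i : ℝ) + 1) := by
    calc x ^ (∑ i, s i - (p - 1) * (ε + η)) = ∏ i, x ^ (s i - (ε + η)) := by
          rw [← Real.rpow_sum_of_pos hx0, Finset.sum_sub_distrib]
          simp [Nat.cast_sub (show 1 ≤ p by omega), mul_add]
      _ ≤ _ := Finset.prod_le_prod (fun i _ => by positivity) fun i _ => hMs i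
  have hX : 2 * (x ^ (1 + ε) / δ l n) < ∏ i, ((M i : ℝ) + 1) := by
    rw [← mul_div_assoc, div_lt_iff₀ (hd l)]
    calc 2 * x ^ (1 + ε) < x ^ ε * x ^ (1 + ε) := by gcongr
      _ = x ^ (1 + 2 * ε) := by rw [← Real.rpow_add hx0]; ring_nf
      _ ≤ x ^ ((∑ i, s i - (p - 1) * (ε + η)) + (γ l - η)) := by
        apply Real.rpow_le_rpow_of_exponent_le hx1
        linear_combination hs + hpη
      _ = x ^ (∑ i, s i - (p - 1) * (ε + η)) * x ^ (γ l - η) := Real.rpow_add hx0 _ _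
      _ ≤ (∏ i, ((M i : ℝ) + 1)) * δ l n := by gcongr; exact hδ l
  obtain ⟨z, w, hzw, hzM, hsmall⟩ := exists_small_form
    (fun i => (δ l n : ℝ) * ξ i / δ (ι i) n) M _ (by have := hd l; positivity) hX
  -- the numerators `(z, w)`, indexed by all of `Fin p`
  let b : Fin p → ℤ := fun i => if h : i.1 < p - 1 then z ⟨i.1, h⟩ else w
  have hbι : ∀ i, b (ι i) = z i := fun i => by simp [b, ι]
  have hbl : b l = w := by simp [b, l]
  have hdq : ∀ i, (δ i n : ℚ) ≠ 0 := fun i => by exact_mod_cast (hδpos i n).ne'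
  refine ⟨fun i => b i / δ i n, ?_, fun i => ⟨b i, by have := hdq i; field_simp⟩, ?_, ?_⟩
  · intro h
    have hb : ∀ i, b i = 0 := fun i => by
      have := congrFun h i
      simpa [hdq i, (hδpos i n).ne'] using this
    rcases hzw with hz | hw
    · exact hz (funext fun i => by rw [← hbι, hb]; rfl)
    · exact hw (by rw [← hbl, hb])
  · intro i
    change |(((b (ι i) : ℚ) / (δ (ι i) n : ℚ) : ℚ) : ℝ)| ≤ _
    rw [hbι]
    push_cast
    rw [abs_div, abs_of_pos (hd (ι i)), div_le_iff₀ (hd (ι i)), mul_comm]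
    exact (hzM i).trans (Nat.floor_le (by positivity))
  · change |∑ i, (((b (ι i) : ℚ) / (δ (ι i) n : ℚ) : ℚ) : ℝ) * ξ i
        + (((b l : ℚ) / (δ l n : ℚ) : ℚ) : ℝ)| ≤ _
    simp only [hbι, hbl]
    push_cast
    have hl := hd l
    have e : ∑ i, (z i : ℝ) / δ (ι i) n * ξ i + w / δ l n
        = (∑ i, (z i : ℝ) * (δ l n * ξ i / δ (ι i) n) + w) / δ l n := by
      rw [add_div, Finset.sum_div]
      congr 1
      refine Finset.sum_congr rfl fun i _ => ?_
      have := hd (ι i)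
      field_simp
    rw [e, abs_div, abs_of_pos hl, div_le_iff₀ hl]
    refine hsmall.trans (le_of_eq ?_)
    rw [show -1 - ε = -(1 + ε) by ring, Real.rpow_neg hx0.le]
    field_simp
end
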